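/- Let d be a positive integer, ε ∈ (0,1), and set n = ⌈2575.5·d·(1+ε)/ε²⌉, η = 1/14, and x = log 2 + 10^{−10}. Then (1/n)·( 1015·(1+η)·d·(1 + √(1 + 2n/(1015d))) + 2√(nx) + (2.5 + 32/η)·x ) ≤ ε. -/

import Mathlib

theorem discrepancy_numerics (d : ℕ) (hd : 0 < d) (ε : ℝ) (hε : ε ∈ Set.Ioo (0 : ℝ) 1)
    (n : ℕ) (hn : n = ⌈(2575.5 * d * (1 + ε) / ε ^ 2 : ℝ)⌉₊)
    (η x : ℝ) (hη : η = 1 / 14) (hx : x = Real.log 2 + 1e-10) :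
    (1 / n : ℝ) * (1015 * (1 + η) * d * (1 + Real.sqrt (1 + 2 * n / (1015 * d)))
      + 2 * Real.sqrt (n * x) + (2.5 + 32 / η) * x) ≤ ε := by
  obtain ⟨h0, h1⟩ := hε
  have hD : (1 : ℝ) ≤ d := by exact_mod_cast hd
  have hN : (2575.5 * d * (1 + ε) / ε ^ 2 : ℝ) ≤ n := by rw [hn]; exact Nat.le_ceil _
  clear hn
  generalize (n : ℝ) = N at *
  generalize (d : ℝ) = D at *
  have hx0 : 0 < x := by
    have := Real.log_two_gt_d9
    rw [hx]; norm_num at *; linarith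
  have hx1 : x ≤ 0.693147181 := by
    have := Real.log_two_lt_d9
    rw [hx]; norm_num at *; linarith
  have hD0 : 0 < D := by linarith
  obtain ⟨k, hk⟩ : ∃ k : ℝ, k = N / (2575.5 * D * (1 + ε) / ε ^ 2) := ⟨_, rfl⟩
  have hM : 0 < 2575.5 * D * (1 + ε) / ε ^ 2 := by positivity
  have hk1 : 1 ≤ k := by rw [hk, le_div_iff₀ hM]; linarith
  have hNk : N = k * (2575.5 * D * (1 + ε) / ε ^ 2) := by
    rw [hk, div_mul_cancel₀ _ hM.ne']
  have hk0 : 0 < k := by linarith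
  have s1 : Real.sqrt (1 + 2 * N / (1015 * D)) ≤ k * ((2.27973 + 1.0594 * ε) / ε) := by
    rw [Real.sqrt_le_left (by positivity)]
    have e1 : 2 * N / (1015 * D) = k * ((5151 / 1015) * (1 + ε) / ε ^ 2) := by
      rw [hNk]; field_simp; norm_num
    have e2 : 1 + (5151 / 1015) * (1 + ε) / ε ^ 2 ≤ ((2.27973 + 1.0594 * ε) / ε) ^ 2 := by
      rw [div_pow, ← sub_nonneg]
      have : ((2.27973 + 1.0594 * ε)) ^ 2 / ε ^ 2 - (1 + (5151 / 1015) * (1 + ε) / ε ^ 2)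
        = ((2.27973 + 1.0594 * ε) ^ 2 - ε ^ 2 - (5151 / 1015) * (1 + ε)) / ε ^ 2 := by
        field_simp; ring
      rw [this]
      apply div_nonneg _ (by positivity)
      nlinarith [sq_nonneg (ε - 1)]
    rw [e1, mul_pow]
    have hc : 0 ≤ (5151 / 1015) * (1 + ε) / ε ^ 2 := by positivity
    calc _ ≤ k ^ 2 * (1 + (5151 / 1015) * (1 + ε) / ε ^ 2) := by
          have : k ≤ k ^ 2 := by nlinarith
          nlinarith
      _ ≤ _ := by gcongr
  have s2 : Real.sqrt (N * x) ≤ k * D * ((44.8149 + 14.9383 * ε) / ε) := by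
    rw [Real.sqrt_le_left (by positivity)]
    have e1 : N * x = (k * D) * ((2575.5 * (1 + ε) * x) / ε ^ 2) := by
      rw [hNk]; ring
    rw [e1, mul_pow, div_pow]
    have : k * D ≤ (k * D) ^ 2 := by
      have : 1 ≤ k * D := by nlinarith
      nlinarith
    gcongr
    nlinarith [sq_nonneg (ε - 1)]
  have hN0 : 0 < N := by linarith
  rw [one_div, inv_mul_le_iff₀ hN0, hη]
  have hkD : 1 ≤ k * D := by nlinarith
  have key : 1087.5 * (ε + (2.27973 + 1.0594 * ε)) + 2 * (44.8149 + 14.9383 * ε)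
      + 450.5 * 0.693147181 * ε ≤ 2575.5 * (1 + ε) := by
    norm_num; linarith
  calc _ ≤ 1015 * (1 + 1 / 14) * D * (k * 1 + k * ((2.27973 + 1.0594 * ε) / ε))
        + 2 * (k * D * ((44.8149 + 14.9383 * ε) / ε)) + (2.5 + 32 / (1 / 14)) * (k * D * 0.693147181) := by
        have : x ≤ k * D * 0.693147181 := by nlinarith
        gcongr
        linarith
    _ = k * D / ε * (1087.5 * (ε + (2.27973 + 1.0594 * ε)) + 2 * (44.8149 + 14.9383 * ε)
      + 450.5 * 0.693147181 * ε) := by field_simp; ring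
    _ ≤ k * D / ε * (2575.5 * (1 + ε)) := by gcongr
    _ = _ := by rw [hNk]; field_simp
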